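/- Let n > 0, λ < 1 with λ ≠ 1 - n², μ ∈ ℝ. In flat spacetime with u = ∂_t and constant n, suppose A_μ solves the evolution system: (Box_m - μ² n^{-2}(1-λ)) A₀ = 0, (Box_γ - μ²) A_i = (1-λ-n²) ∂_i φ for i = 1,2,3, and Box_m φ = μ² n^{-2}(1-λ) φ, and suppose the identities φ = ∂₀ A₀ = (1-λ)^{-1} ∂_i A^i hold at t = 0 together with their first time derivatives. Then ∂₀ A₀ = (1-λ)^{-1} ∂_i A^i holds for all time, i.e. the constraint ∂_α(m^{αβ} A_β) = 0 propagates. -/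

import Mathlib

noncomputable section

/-- Partial derivative `∂_i f`. -/
def pd (i : Fin 4) (f : (Fin 4 → ℝ) → ℝ) : (Fin 4 → ℝ) → ℝ :=
  fun x => fderiv ℝ f x (Pi.single i 1)

/-- `Box_γ = -n²∂₀² + Δ`. -/
def BoxGam (n : ℝ) (f : (Fin 4 → ℝ) → ℝ) : (Fin 4 → ℝ) → ℝ :=
  fun x => -n ^ 2 * pd 0 (pd 0 f) x + ∑ i : Fin 3, pd i.succ (pd i.succ f) x

/-- `Box_m = (λ-1)∂₀² + Δ`. -/
def BoxM (lam : ℝ) (f : (Fin 4 → ℝ) → ℝ) : (Fin 4 → ℝ) → ℝ :=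
  fun x => (lam - 1) * pd 0 (pd 0 f) x + ∑ i : Fin 3, pd i.succ (pd i.succ f) x

lemma pd_smooth {f : (Fin 4 → ℝ) → ℝ} (hf : ContDiff ℝ (⊤ : ℕ∞) f) (i : Fin 4) :
    ContDiff ℝ (⊤ : ℕ∞) (pd i f) := by
  unfold pd
  exact (hf.fderiv_right (m := (⊤ : ℕ∞)) (by exact_mod_cast le_top)).clm_apply contDiff_const

lemma smooth_diff {f : (Fin 4 → ℝ) → ℝ} (hf : ContDiff ℝ (⊤ : ℕ∞) f) : Differentiable ℝ f :=
  hf.differentiable (by simp)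

lemma pd_comm {f : (Fin 4 → ℝ) → ℝ} (hf : ContDiff ℝ (⊤ : ℕ∞) f) (i j : Fin 4) :
    pd i (pd j f) = pd j (pd i f) := by
  funext x
  have h1 : Differentiable ℝ (fderiv ℝ f) :=
    (hf.fderiv_right (m := (⊤ : ℕ∞)) (by exact_mod_cast le_top)).differentiable (by simp)
  have h2 := second_derivative_symmetric (f := f) (f' := fderiv ℝ f) (x := x)
    (fun y => ((smooth_diff hf) y).hasFDerivAt) (h1 x).hasFDerivAt
    (Pi.single i 1) (Pi.single j 1)
  have key : ∀ k l : Fin 4, pd k (pd l f) x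
      = fderiv ℝ (fderiv ℝ f) x (Pi.single k 1) (Pi.single l 1) := by
    intro k l
    unfold pd
    rw [fderiv_clm_apply (h1 x) (differentiableAt_const _)]
    simp
  rw [key, key, h2]

lemma pd_add {f g : (Fin 4 → ℝ) → ℝ} (hf : Differentiable ℝ f) (hg : Differentiable ℝ g)
    (i : Fin 4) : pd i (fun x => f x + g x) = fun x => pd i f x + pd i g x := by
  funext x
  simp only [pd]
  rw [fderiv_fun_add (hf x) (hg x)]; rfl

lemma pd_sub {f g : (Fin 4 → ℝ) → ℝ} (hf : Differentiable ℝ f) (hg : Differentiable ℝ g)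
    (i : Fin 4) : pd i (fun x => f x - g x) = fun x => pd i f x - pd i g x := by
  funext x
  simp only [pd]
  rw [fderiv_fun_sub (hf x) (hg x)]; rfl

lemma pd_mul {f g : (Fin 4 → ℝ) → ℝ} (hf : Differentiable ℝ f) (hg : Differentiable ℝ g)
    (i : Fin 4) : pd i (fun x => f x * g x) = fun x => f x * pd i g x + g x * pd i f x := by
  funext x
  simp only [pd]
  rw [fderiv_fun_mul (hf x) (hg x)]; rfl

lemma pd_cmul {f : (Fin 4 → ℝ) → ℝ} (hf : Differentiable ℝ f) (c : ℝ)
    (i : Fin 4) : pd i (fun x => c * f x) = fun x => c * pd i f x := by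
  funext x
  simp only [pd]
  rw [fderiv_const_mul (hf x) c]; rfl

lemma pd_comp {h : ℝ → ℝ} {q : (Fin 4 → ℝ) → ℝ} (hh : Differentiable ℝ h)
    (hq : Differentiable ℝ q) (i : Fin 4) :
    pd i (fun x => h (q x)) = fun x => deriv h (q x) * pd i q x := by
  funext x
  simp only [pd]
  have := ((hh (q x)).hasDerivAt.comp_hasFDerivAt x (hq x).hasFDerivAt).fderiv
  rw [show (fun x => h (q x)) = h ∘ q from rfl, this]; rfl

/-- Cone function. -/
def qf (a T : ℝ) : (Fin 4 → ℝ) → ℝ :=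
  fun x => (T - x 0) * (T - x 0) - a * (x 1 * x 1 + x 2 * x 2 + x 3 * x 3)

lemma qf_smooth (a T : ℝ) : ContDiff ℝ (⊤ : ℕ∞) (qf a T) := by
  unfold qf; fun_prop

lemma pd_qf (a T : ℝ) (x : Fin 4 → ℝ) :
    pd 0 (qf a T) x = -2 * (T - x 0) ∧ pd 1 (qf a T) x = -2 * a * x 1 ∧
    pd 2 (qf a T) x = -2 * a * x 2 ∧ pd 3 (qf a T) x = -2 * a * x 3 := by
  have c : ∀ j : Fin 4, HasFDerivAt (fun x : Fin 4 → ℝ => x j)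
    (ContinuousLinearMap.proj (R := ℝ) (φ := fun _ : Fin 4 => ℝ) j) x :=
    fun j => hasFDerivAt_apply j x
  have hT := (c 0).const_sub T
  have h := (hT.mul hT).sub
    (((((c 1).mul (c 1)).add ((c 2).mul (c 2))).add ((c 3).mul (c 3))).const_mul a)
  have h' : HasFDerivAt (qf a T) _ x := h
  simp only [pd, h'.fderiv]
  refine ⟨?_, ?_, ?_, ?_⟩ <;> simp <;> ring

lemma deriv_glue_nonneg (r : ℝ) : 0 ≤ deriv expNegInvGlue r :=
  expNegInvGlue.monotone.deriv_nonneg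

lemma deriv_glue_zero {r : ℝ} (hr : r ≤ 0) : deriv expNegInvGlue r = 0 := by
  apply IsLocalMin.deriv_eq_zero
  refine Filter.Eventually.of_forall fun y => ?_
  rw [expNegInvGlue.zero_of_nonpos hr]
  exact expNegInvGlue.nonneg y

/-- Energy current. -/
def Vf (a m T : ℝ) (f : (Fin 4 → ℝ) → ℝ) (i : Fin 4) : (Fin 4 → ℝ) → ℝ :=
  if i = 0 then
    fun x => expNegInvGlue (qf a T x) *
      (a * (pd 0 f x * pd 0 f x) + (pd 1 f x * pd 1 f x + pd 2 f x * pd 2 f x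
        + pd 3 f x * pd 3 f x) + m * (f x * f x))
  else fun x => expNegInvGlue (qf a T x) * (-2 * (pd 0 f x * pd i f x))

lemma Vf_smooth (a m T : ℝ) {f : (Fin 4 → ℝ) → ℝ} (hf : ContDiff ℝ (⊤ : ℕ∞) f) (i : Fin 4) :
    ContDiff ℝ (⊤ : ℕ∞) (Vf a m T f i) := by
  have hg : ContDiff ℝ (⊤ : ℕ∞) (fun x => expNegInvGlue (qf a T x)) :=
    expNegInvGlue.contDiff.comp (qf_smooth a T)
  have h := pd_smooth hf
  have h0 := h 0
  have h1 := h 1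
  have h2 := h 2
  have h3 := h 3
  have hi := h i
  unfold Vf
  split_ifs <;> fun_prop

lemma cone_ineq {a t p u v w x y z : ℝ} (ha : 0 < a) (ht : 0 ≤ t)
    (hq : a * (x * x + y * y + z * z) ≤ t * t) :
    2 * a * p * (x * u + y * v + z * w)
      ≤ t * (a * (p * p) + (u * u + v * v + w * w)) := by
  rcases ht.eq_or_lt with rfl | ht
  · have : x * x + y * y + z * z ≤ 0 := by
      by_contra hc
      push Not at hc
      nlinarith [mul_pos ha hc]
    have hx : x = 0 := by nlinarith [mul_self_nonneg x, mul_self_nonneg y, mul_self_nonneg z]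
    have hy : y = 0 := by nlinarith [mul_self_nonneg x, mul_self_nonneg y, mul_self_nonneg z]
    have hz : z = 0 := by nlinarith [mul_self_nonneg x, mul_self_nonneg y, mul_self_nonneg z]
    subst hx hy hz
    simp
  · have h1 : 0 ≤ (t * u - a * p * x) ^ 2 + (t * v - a * p * y) ^ 2 + (t * w - a * p * z) ^ 2 := by
      positivity
    have h2 : a * p ^ 2 * (a * (x * x + y * y + z * z)) ≤ a * p ^ 2 * (t * t) :=
      mul_le_mul_of_nonneg_left hq (by positivity)
    have h3 : t * (2 * a * p * (x * u + y * v + z * w))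
      ≤ t * (t * (a * (p * p) + (u * u + v * v + w * w))) := by nlinarith
    exact le_of_mul_le_mul_left h3 ht

lemma div_nonpos {a m T : ℝ} (ha : 0 < a) (hm : 0 ≤ m) {f : (Fin 4 → ℝ) → ℝ}
    (hf : ContDiff ℝ (⊤ : ℕ∞) f)
    (heq : ∀ x, a * pd 0 (pd 0 f) x
      = pd 1 (pd 1 f) x + pd 2 (pd 2 f) x + pd 3 (pd 3 f) x - m * f x)
    (x : Fin 4 → ℝ) (hx : x 0 ≤ T) :
    ∑ i, pd i (Vf a m T f i) x ≤ 0 := by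
  have hg : Differentiable ℝ (fun x => expNegInvGlue (qf a T x)) :=
    smooth_diff (expNegInvGlue.contDiff.comp (qf_smooth a T))
  have hgd : Differentiable ℝ expNegInvGlue :=
    (expNegInvGlue.contDiff (n := (⊤ : ℕ∞))).differentiable (by simp)
  have hq := smooth_diff (qf_smooth a T)
  have d := fun i => smooth_diff (pd_smooth hf i)
  have df := smooth_diff hf
  have dd : ∀ i j, Differentiable ℝ (fun x => pd i f x * pd j f x) := fun i j => (d i).mul (d j)
  have dff : Differentiable ℝ (fun x => f x * f x) := df.mul df
  have dS : Differentiable ℝ (fun x => pd 1 f x * pd 1 f x + pd 2 f x * pd 2 f x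
        + pd 3 f x * pd 3 f x) := ((dd 1 1).fun_add (dd 2 2)).fun_add (dd 3 3)
  have e0 : pd 0 (Vf a m T f 0) x = expNegInvGlue (qf a T x) *
      (2 * a * pd 0 f x * pd 0 (pd 0 f) x + 2 * (pd 1 f x * pd 0 (pd 1 f) x
        + pd 2 f x * pd 0 (pd 2 f) x + pd 3 f x * pd 0 (pd 3 f) x) + 2 * m * f x * pd 0 f x)
      + (a * (pd 0 f x * pd 0 f x) + (pd 1 f x * pd 1 f x + pd 2 f x * pd 2 f x
        + pd 3 f x * pd 3 f x) + m * (f x * f x)) * (deriv expNegInvGlue (qf a T x)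
          * (-2 * (T - x 0))) := by
    have : Vf a m T f 0 = fun x => expNegInvGlue (qf a T x) *
      (a * (pd 0 f x * pd 0 f x) + (pd 1 f x * pd 1 f x + pd 2 f x * pd 2 f x
        + pd 3 f x * pd 3 f x) + m * (f x * f x)) := by simp [Vf]
    rw [this, pd_mul hg ((((dd 0 0).const_mul a).fun_add dS).fun_add (dff.const_mul m)),
      pd_add (((dd 0 0).const_mul a).fun_add dS) (dff.const_mul m),
      pd_add ((dd 0 0).const_mul a) dS, pd_cmul (dd 0 0), pd_cmul dff,
      pd_add ((dd 1 1).fun_add (dd 2 2)) (dd 3 3), pd_add (dd 1 1) (dd 2 2),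
      pd_mul (d 0) (d 0), pd_mul (d 1) (d 1), pd_mul (d 2) (d 2), pd_mul (d 3) (d 3),
      pd_mul df df, pd_comp hgd hq]
    simp only [(pd_qf a T x).1]
    ring
  have ei : ∀ i, i ≠ 0 → pd i (Vf a m T f i) x = expNegInvGlue (qf a T x) *
      (-2 * (pd 0 f x * pd i (pd i f) x + pd i f x * pd 0 (pd i f) x))
      - 2 * (pd 0 f x * pd i f x) * (deriv expNegInvGlue (qf a T x) * pd i (qf a T) x) := by
    intro i hi
    have : Vf a m T f i = fun x => expNegInvGlue (qf a T x) * (-2 * (pd 0 f x * pd i f x)) := by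
      simp [Vf, hi]
    rw [this, pd_mul hg ((dd 0 i).const_mul _), pd_cmul (dd 0 i), pd_mul (d 0) (d i),
      pd_comp hgd hq, pd_comm hf 0 i]
    ring
  rw [Fin.sum_univ_four, e0, ei 1 (by decide), ei 2 (by decide), ei 3 (by decide),
    (pd_qf a T x).2.1, (pd_qf a T x).2.2.1, (pd_qf a T x).2.2.2]
  have key : deriv expNegInvGlue (qf a T x) *
      (2 * (2 * a * pd 0 f x * (x 1 * pd 1 f x + x 2 * pd 2 f x + x 3 * pd 3 f x)
        - (T - x 0) * (a * (pd 0 f x * pd 0 f x) + (pd 1 f x * pd 1 f x + pd 2 f x * pd 2 f x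
        + pd 3 f x * pd 3 f x))) - 2 * ((T - x 0) * (m * (f x * f x)))) ≤ 0 := by
    rcases le_total (qf a T x) 0 with h | h
    · rw [deriv_glue_zero h]; simp
    · have h1 := cone_ineq (p := pd 0 f x) (u := pd 1 f x) (v := pd 2 f x) (w := pd 3 f x)
        (x := x 1) (y := x 2) (z := x 3) (t := T - x 0) ha (by linarith)
        (by unfold qf at h; linarith)
      have h2 : 0 ≤ (T - x 0) * (m * (f x * f x)) :=
        mul_nonneg (by linarith) (mul_nonneg hm (mul_self_nonneg _))
      exact mul_nonpos_of_nonneg_of_nonpos (deriv_glue_nonneg _) (by linarith)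
  have h := heq x
  have h' : pd 1 (pd 1 f) x = a * pd 0 (pd 0 f) x - pd 2 (pd 2 f) x - pd 3 (pd 3 f) x
    + m * f x := by linarith
  rw [h']
  refine le_trans (le_of_eq ?_) key
  ring

lemma pd_spatial_zero {f : (Fin 4 → ℝ) → ℝ} (hf : ContDiff ℝ (⊤ : ℕ∞) f)
    (h0 : ∀ x, x 0 = 0 → f x = 0) (i : Fin 4) (hi : i ≠ 0) (x : Fin 4 → ℝ) (hx : x 0 = 0) :
    pd i f x = 0 := by
  unfold pd
  rw [← (smooth_diff hf x).lineDeriv_eq_fderiv]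
  unfold lineDeriv
  have : (fun t : ℝ => f (x + t • Pi.single i 1)) = fun _ => 0 := by
    funext t
    apply h0
    simp [hx, hi.symm]
  rw [this]; simp

set_option maxHeartbeats 1000000 in
open MeasureTheory Set in
lemma forward {a m : ℝ} (ha : 0 < a) (hm : 0 ≤ m) {f : (Fin 4 → ℝ) → ℝ}
    (hf : ContDiff ℝ (⊤ : ℕ∞) f)
    (heq : ∀ x, a * pd 0 (pd 0 f) x
      = pd 1 (pd 1 f) x + pd 2 (pd 2 f) x + pd 3 (pd 3 f) x - m * f x)
    (h0 : ∀ x, x 0 = 0 → f x = 0) (h1 : ∀ x, x 0 = 0 → pd 0 f x = 0)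
    (z : Fin 4 → ℝ) (hz : 0 ≤ z 0) : pd 0 f z = 0 := by
  set Y := a * (z 1 * z 1 + z 2 * z 2 + z 3 * z 3) with hY
  have hY0 : 0 ≤ Y := mul_nonneg ha.le
    (add_nonneg (add_nonneg (mul_self_nonneg _) (mul_self_nonneg _)) (mul_self_nonneg _))
  set T := z 0 + 1 + Y with hT
  set ρ := 1 + T ^ 2 / a + |z 1| + |z 2| + |z 3| with hρ
  have hTa : 0 ≤ T ^ 2 / a := by positivity
  have hρ1 : 1 + T ^ 2 / a ≤ ρ := by
    have := abs_nonneg (z 1); have := abs_nonneg (z 2); have := abs_nonneg (z 3); linarith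
  have hρT : T * T ≤ a * (ρ * ρ) := by
    have : T ^ 2 / a ≤ ρ * ρ := by nlinarith
    rw [div_le_iff₀ ha] at this
    nlinarith
  have hzρ : ∀ i : Fin 3, |z i.succ| < ρ := by
    have := abs_nonneg (z 1); have := abs_nonneg (z 2); have := abs_nonneg (z 3)
    intro i; fin_cases i <;> simp <;> linarith
  let lo : Fin 4 → ℝ := Fin.cons 0 fun _ => -ρ
  let hi : Fin 4 → ℝ := Fin.cons (z 0) fun _ => ρ
  have hle : lo ≤ hi := by
    intro i
    refine Fin.cases ?_ (fun j => ?_) i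
    · simpa [lo, hi] using hz
    · simp only [lo, hi, Fin.cons_succ]; linarith
  have hV := fun i => Vf_smooth a m T hf i
  have hcont : Continuous fun x => ∑ i, pd i (Vf a m T f i) x :=
    continuous_finsetSum _ fun i _ => (pd_smooth (hV i) i).continuous
  have hdiv := integral_divergence_of_hasFDerivAt_off_countable' lo hi hle (Vf a m T f)
    (fun i x => fderiv ℝ (Vf a m T f i) x) ∅ countable_empty
    (fun i => (hV i).continuous.continuousOn)
    (fun x _ i => (smooth_diff (hV i) x).hasFDerivAt)
    (hcont.continuousOn.integrableOn_compact isCompact_Icc)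
  have hneg : ∫ x in Icc lo hi, ∑ i, fderiv ℝ (Vf a m T f i) x (Pi.single i 1) ≤ 0 := by
    apply setIntegral_nonpos measurableSet_Icc
    intro x hx
    refine div_nonpos ha hm hf heq x ?_
    have := hx.2 0
    simp only [hi, Fin.cons_zero] at this
    linarith
  have hside : ∀ (j : Fin 3) (s : ℝ), s * s = ρ * ρ →
      ∫ x in Icc (lo ∘ Fin.succAbove j.succ) (hi ∘ Fin.succAbove j.succ),
        Vf a m T f j.succ (Fin.insertNth j.succ s x) = 0 := by
    intro j s hs
    apply setIntegral_eq_zero_of_forall_eq_zero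
    intro x hx
    set p : Fin 4 → ℝ := Fin.insertNth j.succ s x with hp
    have hpj : p j.succ = s := by simp [hp]
    have hp0 : p 0 = x 0 := by
      have h := Fin.insertNth_apply_succAbove (α := fun _ => ℝ) j.succ s x 0
      rwa [Fin.succ_succAbove_zero] at h
    have hx1 := hx.1 0
    have hx2 := hx.2 0
    simp only [Function.comp, Fin.succ_succAbove_zero, lo, hi, Fin.cons_zero] at hx1 hx2
    have hq : qf a T p ≤ 0 := by
      have h3 : s * s ≤ p 1 * p 1 + p 2 * p 2 + p 3 * p 3 := by
        have := mul_self_nonneg (p 1)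
        have := mul_self_nonneg (p 2)
        have := mul_self_nonneg (p 3)
        rw [← hpj]
        fin_cases j <;> simp <;> linarith
      have h4 := mul_le_mul_of_nonneg_left h3 ha.le
      rw [hs] at h4
      unfold qf
      rw [hp0]
      nlinarith
    simp [Vf, expNegInvGlue.zero_of_nonpos hq]
  have hbot : ∫ x in Icc (lo ∘ Fin.succAbove 0) (hi ∘ Fin.succAbove 0),
        Vf a m T f 0 (Fin.insertNth 0 (lo 0) x) = 0 := by
    apply setIntegral_eq_zero_of_forall_eq_zero
    intro x hx
    set p : Fin 4 → ℝ := Fin.insertNth 0 (lo 0) x with hp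
    have hp0 : p 0 = 0 := by simp [hp, lo]
    simp [Vf, h0 p hp0, h1 p hp0, pd_spatial_zero hf h0 1 (by decide) p hp0,
      pd_spatial_zero hf h0 2 (by decide) p hp0, pd_spatial_zero hf h0 3 (by decide) p hp0]
  rw [Fin.sum_univ_succ, hbot, Finset.sum_eq_zero (fun j _ => by
    rw [hside j _ (by simp [hi]), hside j _ (by simp [lo]), sub_zero])] at hdiv
  rw [hdiv] at hneg
  simp only [sub_zero, add_zero] at hneg
  set G : (Fin 3 → ℝ) → ℝ := fun y => Vf a m T f 0 (Fin.insertNth 0 (hi 0) y) with hG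
  have hGc : Continuous G := by
    refine (hV 0).continuous.comp ?_
    refine continuous_pi fun i => ?_
    refine Fin.cases ?_ (fun j => ?_) i
    · simpa using continuous_const
    · simpa using continuous_apply j
  have hGn : ∀ y, 0 ≤ G y := by
    intro y
    simp only [hG, Vf, if_true]
    refine mul_nonneg (expNegInvGlue.nonneg _) ?_
    have := mul_nonneg hm (mul_self_nonneg (f (Fin.insertNth 0 (hi 0) y)))
    have := mul_nonneg ha.le (mul_self_nonneg (pd 0 f (Fin.insertNth 0 (hi 0) y)))
    have := mul_self_nonneg (pd 1 f (Fin.insertNth 0 (hi 0) y))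
    have := mul_self_nonneg (pd 2 f (Fin.insertNth 0 (hi 0) y))
    have := mul_self_nonneg (pd 3 f (Fin.insertNth 0 (hi 0) y))
    linarith
  have hint : ∫ y in Icc (lo ∘ Fin.succAbove 0) (hi ∘ Fin.succAbove 0), G y = 0 :=
    le_antisymm hneg (setIntegral_nonneg measurableSet_Icc fun y _ => hGn y)
  rw [setIntegral_eq_zero_iff_of_nonneg_ae (Filter.Eventually.of_forall hGn)
    (hGc.continuousOn.integrableOn_compact isCompact_Icc)] at hint
  have hsub : (Set.univ.pi fun _ : Fin 3 => Ioo (-ρ) ρ)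
      ⊆ Icc (lo ∘ Fin.succAbove 0) (hi ∘ Fin.succAbove 0) := by
    intro y hy
    constructor
    · intro i
      have := (hy i (mem_univ i)).1.le
      simpa [lo] using this
    · intro i
      have := (hy i (mem_univ i)).2.le
      simpa [hi] using this
  have hE := Measure.eqOn_open_of_ae_eq (ae_restrict_of_ae_restrict_of_subset hsub hint)
    (isOpen_set_pi finite_univ fun _ _ => isOpen_Ioo) hGc.continuousOn continuousOn_const
  have hz' := hE (x := fun i => z i.succ) (fun i _ => abs_lt.1 (hzρ i))
  have hins : (Fin.insertNth 0 (hi 0) (fun i : Fin 3 => z i.succ) : Fin 4 → ℝ) = z := by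
    funext i
    refine Fin.cases ?_ (fun j => ?_) i <;> simp [hi]
  simp only [hG, hins, Vf, if_true, Pi.zero_apply] at hz'
  have hqpos : 0 < qf a T z := by
    unfold qf
    rw [← hY, show T - z 0 = 1 + Y by rw [hT]; ring]
    clear_value Y
    clear * - hY0
    nlinarith
  have hs := (mul_eq_zero.1 hz').resolve_left (expNegInvGlue.pos_of_pos hqpos).ne'
  have g0 := mul_nonneg hm (mul_self_nonneg (f z))
  have g1 := mul_self_nonneg (pd 1 f z)
  have g2 := mul_self_nonneg (pd 2 f z)
  have g3 := mul_self_nonneg (pd 3 f z)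
  have g4 := mul_nonneg ha.le (mul_self_nonneg (pd 0 f z))
  have g5 : a * (pd 0 f z * pd 0 f z) = 0 := by linarith
  simpa [ha.ne'] using g5

/-- Time reflection. -/
def refl4 : (Fin 4 → ℝ) →L[ℝ] (Fin 4 → ℝ) :=
  ContinuousLinearMap.pi fun i =>
    (if i = 0 then (-1 : ℝ) else 1) • ContinuousLinearMap.proj (R := ℝ) (φ := fun _ : Fin 4 => ℝ) i

lemma refl4_apply (x : Fin 4 → ℝ) (i : Fin 4) :
    refl4 x i = (if i = 0 then (-1 : ℝ) else 1) * x i := by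
  by_cases h : i = 0 <;> simp [refl4, h]

lemma refl4_refl4 (x : Fin 4 → ℝ) : refl4 (refl4 x) = x := by
  funext i
  rw [refl4_apply, refl4_apply]
  split_ifs <;> simp

lemma pd_refl {f : (Fin 4 → ℝ) → ℝ} (hf : Differentiable ℝ f) (i : Fin 4) :
    pd i (fun x => f (refl4 x)) = fun x => (if i = 0 then (-1 : ℝ) else 1) * pd i f (refl4 x) := by
  funext x
  simp only [pd]
  have h := ((hf (refl4 x)).hasFDerivAt.comp x refl4.hasFDerivAt).fderiv
  rw [show (fun x => f (refl4 x)) = f ∘ refl4 from rfl, h]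
  have : refl4 (Pi.single i 1) = (if i = 0 then (-1 : ℝ) else 1) • (Pi.single i 1 : Fin 4 → ℝ) := by
    funext j
    rw [refl4_apply]
    by_cases hij : j = i
    · subst hij; simp
    · simp [hij]
  rw [ContinuousLinearMap.comp_apply, this, map_smul, smul_eq_mul]

lemma uniq {a m : ℝ} (ha : 0 < a) (hm : 0 ≤ m) {f : (Fin 4 → ℝ) → ℝ}
    (hf : ContDiff ℝ (⊤ : ℕ∞) f)
    (heq : ∀ x, a * pd 0 (pd 0 f) x
      = pd 1 (pd 1 f) x + pd 2 (pd 2 f) x + pd 3 (pd 3 f) x - m * f x)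
    (h0 : ∀ x, x 0 = 0 → f x = 0) (h1 : ∀ x, x 0 = 0 → pd 0 f x = 0)
    (z : Fin 4 → ℝ) : f z = 0 := by
  have hall : ∀ z, pd 0 f z = 0 := by
    intro z
    rcases le_total 0 (z 0) with hz | hz
    · exact forward ha hm hf heq h0 h1 z hz
    · have df := smooth_diff hf
      have hg : ContDiff ℝ (⊤ : ℕ∞) (fun x => f (refl4 x)) := hf.comp refl4.contDiff
      have d := fun i => smooth_diff (pd_smooth hf i)
      have dr : ∀ i, Differentiable ℝ (fun x => pd i f (refl4 x)) :=
        fun i => (d i).comp refl4.differentiable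
      have h2 : ∀ i, pd i (pd i (fun x => f (refl4 x))) = fun x => pd i (pd i f) (refl4 x) := by
        intro i
        rw [pd_refl df, pd_cmul (dr i), pd_refl (d i)]
        funext x
        split_ifs <;> simp
      have hr0 : ∀ x : Fin 4 → ℝ, refl4 x 0 = - x 0 := by intro x; simp [refl4_apply]
      have := forward ha hm hg (fun x => by simp only [h2]; exact heq (refl4 x))
        (fun x hx => h0 _ (by rw [hr0, hx, neg_zero]))
        (fun x hx => by rw [pd_refl df]; simp [h1 (refl4 x) (by rw [hr0, hx, neg_zero])])
        (refl4 z) (by rw [hr0]; linarith)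
      rw [pd_refl df] at this
      simpa [refl4_refl4] using this
  have hd : ∀ s : ℝ, HasDerivAt (fun s : ℝ => f (z + s • Pi.single 0 1)) 0 s := by
    intro s
    have h2 : HasDerivAt (fun s : ℝ => z + s • (Pi.single 0 1 : Fin 4 → ℝ)) (Pi.single 0 1) s := by
      simpa using ((hasDerivAt_id s).smul_const (Pi.single 0 1 : Fin 4 → ℝ)).const_add z
    have h3 := (smooth_diff hf (z + s • Pi.single 0 1)).hasFDerivAt.comp_hasDerivAt s h2
    have h4 := hall (z + s • Pi.single 0 1)
    unfold pd at h4
    rw [h4] at h3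
    exact h3
  have hc := is_const_of_deriv_eq_zero (fun s => (hd s).differentiableAt)
    (fun s => (hd s).deriv) 0 (-z 0)
  simp only [zero_smul, add_zero] at hc
  rw [hc]
  apply h0
  simp

/-- propagation of the constraint `∂₀A₀ = (1-λ)⁻¹ ∂_i A^i`
(`∂_α(m^{αβ}A_β) = 0`) by the evolution system in flat spacetime. -/
theorem constraint_propagation
    (lam μ n : ℝ) (hn : 0 < n) (hlam : lam < 1) (hlam' : lam ≠ 1 - n ^ 2)
    (A : (Fin 4 → ℝ) → Fin 4 → ℝ) (φ : (Fin 4 → ℝ) → ℝ)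
    (hA : ∀ a : Fin 4, ContDiff ℝ (⊤ : ℕ∞) (fun x => A x a)) (hφ : ContDiff ℝ (⊤ : ℕ∞) φ)
    -- the evolution system
    (heq0 : ∀ x, BoxM lam (fun y => A y 0) x
      - μ ^ 2 * (n ^ 2)⁻¹ * (1 - lam) * A x 0 = 0)
    (heqi : ∀ (i : Fin 3) (x), BoxGam n (fun y => A y i.succ) x
      - μ ^ 2 * A x i.succ = (1 - lam - n ^ 2) * pd i.succ φ x)
    (heqφ : ∀ x, BoxM lam φ x = μ ^ 2 * (n ^ 2)⁻¹ * (1 - lam) * φ x)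
    -- the identities hold at t = 0, together with their first time derivatives
    (hinit1 : ∀ x : Fin 4 → ℝ, x 0 = 0 → φ x = pd 0 (fun y => A y 0) x)
    (hinit2 : ∀ x : Fin 4 → ℝ, x 0 = 0 → pd 0 (fun y => A y 0) x
      = (1 - lam)⁻¹ * ∑ i : Fin 3, pd i.succ (fun y => A y i.succ) x)
    (hinit1' : ∀ x : Fin 4 → ℝ, x 0 = 0 →
      pd 0 (fun y => φ y - pd 0 (fun z => A z 0) y) x = 0)
    (hinit2' : ∀ x : Fin 4 → ℝ, x 0 = 0 →
      pd 0 (fun y => pd 0 (fun z => A z 0) y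
        - (1 - lam)⁻¹ * ∑ i : Fin 3, pd i.succ (fun z => A z i.succ) y) x = 0)
    -- compactly supported initial data
    (hsupA : ∀ a : Fin 4, HasCompactSupport (fun y : Fin 3 → ℝ => A (Fin.cons 0 y) a))
    (hsupA' : ∀ a : Fin 4, HasCompactSupport
      (fun y : Fin 3 → ℝ => pd 0 (fun z => A z a) (Fin.cons 0 y)))
    (hsupφ : HasCompactSupport (fun y : Fin 3 → ℝ => φ (Fin.cons 0 y)))
    (hsupφ' : HasCompactSupport (fun y : Fin 3 → ℝ => pd 0 φ (Fin.cons 0 y))) :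
    ∀ x : Fin 4 → ℝ, pd 0 (fun y => A y 0) x
      = (1 - lam)⁻¹ * ∑ i : Fin 3, pd i.succ (fun y => A y i.succ) x := by
  have hS : 0 < 1 - lam := by linarith
  set S := 1 - lam with hSdef
  have hl : lam - 1 = -S := by rw [hSdef]; ring
  have sA := fun a i => pd_smooth (hA a) i
  have dA := fun a i => smooth_diff (sA a i)
  have ssA := fun a i j => pd_smooth (sA a i) j
  have d2A := fun a i j => smooth_diff (ssA a i j)
  have dφ := smooth_diff hφ
  have dpφ := fun i => smooth_diff (pd_smooth hφ i)
  have hM : 0 ≤ μ ^ 2 * (n ^ 2)⁻¹ * S := by positivity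
  -- first step: `φ = ∂₀ A₀`
  have hχ : ∀ x, φ x = pd 0 (fun y => A y 0) x := by
    intro x
    have hsm : ContDiff ℝ (⊤ : ℕ∞) (fun y => φ y - pd 0 (fun z => A z 0) y) := hφ.sub (sA 0 0)
    have h := uniq hS hM hsm ?_ (fun x hx => by simp [hinit1 x hx]) hinit1' x
    · linarith
    · intro x
      have e1 : ∀ i, pd i (pd i (fun y => φ y - pd 0 (fun z => A z 0) y)) x
          = pd i (pd i φ) x - pd 0 (pd i (pd i (fun z => A z 0))) x := by
        intro i
        rw [pd_sub dφ (dA 0 0), pd_sub (dpφ i) (d2A 0 0 i), pd_comm (hA 0) i 0,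
          pd_comm (sA 0 i) i 0]
      have hder : pd 0 (fun x => BoxM lam (fun y => A y 0) x
          - μ ^ 2 * (n ^ 2)⁻¹ * S * A x 0) x = 0 := by
        rw [funext heq0]; simp [pd]
      have hu : (fun x => BoxM lam (fun y => A y 0) x - μ ^ 2 * (n ^ 2)⁻¹ * S * A x 0)
          = fun x => ((-S) * pd 0 (pd 0 (fun y => A y 0)) x
            + (pd 1 (pd 1 (fun y => A y 0)) x + pd 2 (pd 2 (fun y => A y 0)) x
              + pd 3 (pd 3 (fun y => A y 0)) x)) - μ ^ 2 * (n ^ 2)⁻¹ * S * A x 0 := by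
        funext x; simp only [BoxM, Fin.sum_univ_three, hl]; rfl
      rw [hu, pd_sub (((d2A 0 0 0).const_mul _).fun_add (((d2A 0 1 1).fun_add (d2A 0 2 2)).fun_add (d2A 0 3 3)))
        ((smooth_diff (hA 0)).const_mul _),
        pd_add ((d2A 0 0 0).const_mul _) (((d2A 0 1 1).fun_add (d2A 0 2 2)).fun_add (d2A 0 3 3)),
        pd_cmul (d2A 0 0 0), pd_add ((d2A 0 1 1).fun_add (d2A 0 2 2)) (d2A 0 3 3),
        pd_add (d2A 0 1 1) (d2A 0 2 2), pd_cmul (smooth_diff (hA 0))] at hder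
      have hp := heqφ x
      simp only [BoxM, Fin.sum_univ_three, hl] at hp
      change -S * pd 0 (pd 0 φ) x + (pd 1 (pd 1 φ) x + pd 2 (pd 2 φ) x + pd 3 (pd 3 φ) x)
        = _ at hp
      rw [e1, e1, e1, e1]
      simp only at hder
      linarith
  -- second step
  intro x
  have hfun : (fun y => pd 0 (fun z => A z 0) y
        - S⁻¹ * ∑ i : Fin 3, pd i.succ (fun z => A z i.succ) y)
      = fun y => φ y - S⁻¹ * (pd 1 (fun z => A z 1) y + pd 2 (fun z => A z 2) y
        + pd 3 (fun z => A z 3) y) := by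
    funext y; rw [hχ y]; simp only [Fin.sum_univ_three]; rfl
  have hD : ContDiff ℝ (⊤ : ℕ∞) (fun y => pd 1 (fun z => A z 1) y + pd 2 (fun z => A z 2) y
        + pd 3 (fun z => A z 3) y) := ((sA 1 1).add (sA 2 2)).add (sA 3 3)
  have hsm : ContDiff ℝ (⊤ : ℕ∞) (fun y => φ y - S⁻¹ * (pd 1 (fun z => A z 1) y
      + pd 2 (fun z => A z 2) y + pd 3 (fun z => A z 3) y)) := hφ.sub (contDiff_const.mul hD)
  have h := uniq (a := n ^ 2) (m := μ ^ 2) (by positivity) (by positivity) hsm ?_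
    (fun x hx => by
      have h1 := hinit2 x hx
      have h2 := congrFun hfun x
      rw [← h2]; linarith)
    (fun x hx => by rw [← hfun]; exact hinit2' x hx) x
  · have h2 := congrFun hfun x
    rw [h] at h2
    linarith
  · intro x
    have e1 : ∀ i, pd i (pd i (fun y => φ y - S⁻¹ * (pd 1 (fun z => A z 1) y
        + pd 2 (fun z => A z 2) y + pd 3 (fun z => A z 3) y))) x
        = pd i (pd i φ) x - S⁻¹ * (pd 1 (pd i (pd i (fun z => A z 1))) x
          + pd 2 (pd i (pd i (fun z => A z 2))) x + pd 3 (pd i (pd i (fun z => A z 3))) x) := by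
      intro i
      rw [pd_sub dφ ((smooth_diff hD).const_mul _), pd_cmul (smooth_diff hD),
        pd_add ((dA 1 1).fun_add (dA 2 2)) (dA 3 3), pd_add (dA 1 1) (dA 2 2),
        pd_sub (dpφ i) ((((d2A 1 1 i).fun_add (d2A 2 2 i)).fun_add (d2A 3 3 i)).const_mul _),
        pd_cmul (((d2A 1 1 i).fun_add (d2A 2 2 i)).fun_add (d2A 3 3 i)),
        pd_add ((d2A 1 1 i).fun_add (d2A 2 2 i)) (d2A 3 3 i), pd_add (d2A 1 1 i) (d2A 2 2 i),
        pd_comm (hA 1) i 1, pd_comm (hA 2) i 2, pd_comm (hA 3) i 3,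
        pd_comm (sA 1 i) i 1, pd_comm (sA 2 i) i 2, pd_comm (sA 3 i) i 3]
    have hder : ∀ j : Fin 3, -n ^ 2 * pd j.succ (pd 0 (pd 0 (fun z => A z j.succ))) x
        + (pd j.succ (pd 1 (pd 1 (fun z => A z j.succ))) x
          + pd j.succ (pd 2 (pd 2 (fun z => A z j.succ))) x
          + pd j.succ (pd 3 (pd 3 (fun z => A z j.succ))) x)
        - μ ^ 2 * pd j.succ (fun z => A z j.succ) x
        = (S - n ^ 2) * pd j.succ (pd j.succ φ) x := by
      intro j
      have hu : (fun x => (-n ^ 2 * pd 0 (pd 0 (fun z => A z j.succ)) x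
        + (pd 1 (pd 1 (fun z => A z j.succ)) x
          + pd 2 (pd 2 (fun z => A z j.succ)) x
          + pd 3 (pd 3 (fun z => A z j.succ)) x))
        - μ ^ 2 * A x j.succ) = fun x => (S - n ^ 2) * pd j.succ φ x := by
        funext x
        rw [← heqi j x]
        simp only [BoxGam, Fin.sum_univ_three]; rfl
      have hc := congrFun (congrArg (pd j.succ) hu) x
      rw [pd_sub (((d2A _ 0 0).const_mul _).fun_add (((d2A _ 1 1).fun_add (d2A _ 2 2)).fun_add (d2A _ 3 3)))
        ((smooth_diff (hA _)).const_mul _),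
        pd_add ((d2A _ 0 0).const_mul _) (((d2A _ 1 1).fun_add (d2A _ 2 2)).fun_add (d2A _ 3 3)),
        pd_cmul (d2A _ 0 0), pd_add ((d2A _ 1 1).fun_add (d2A _ 2 2)) (d2A _ 3 3),
        pd_add (d2A _ 1 1) (d2A _ 2 2), pd_cmul (smooth_diff (hA _)), pd_cmul (dpφ _)] at hc
      exact hc
    have g1 := hder 0
    have g2 := hder 1
    have g3 := hder 2
    have hp := heqφ x
    simp only [BoxM, Fin.sum_univ_three, hl] at hp
    change -S * pd 0 (pd 0 φ) x + (pd 1 (pd 1 φ) x + pd 2 (pd 2 φ) x + pd 3 (pd 3 φ) x)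
        = _ at hp
    rw [show (Fin.succ 0 : Fin 4) = 1 from rfl] at g1
    rw [show (Fin.succ 1 : Fin 4) = 2 from rfl] at g2
    rw [show (Fin.succ 2 : Fin 4) = 3 from rfl] at g3
    have hp' : n ^ 2 * pd 0 (pd 0 φ) x = n ^ 2 * S⁻¹ * (pd 1 (pd 1 φ) x + pd 2 (pd 2 φ) x
        + pd 3 (pd 3 φ) x) - μ ^ 2 * φ x := by
      field_simp
      field_simp at hp
      linarith
    have hSS : S⁻¹ * S = 1 := inv_mul_cancel₀ hS.ne'
    rw [e1, e1, e1, e1]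
    linear_combination hp' + S⁻¹ * (g1 + g2 + g3)
      + (pd 1 (pd 1 φ) x + pd 2 (pd 2 φ) x + pd 3 (pd 3 φ) x) * hSS
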